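/- Let q ∈ ℂ with 0 < |q| < 1, and for k ∈ ℤ let c_k(q) = ∑_{m=0}^∞ (−1)^m q^{(m+1)(m−2k)/2}, an absolutely convergent series of complex numbers. Then for every t ∈ ℂ with 1 < |t| < 1/|q| the bilateral series ∑_{k∈ℤ} c_k(q) t^{−k} converges absolutely and equals ∑_{m=0}^∞ (−1)^m q^{m(m+1)/2} ( q^m t^{−1}/(1 − t^{−1}q^m) + 1 + q^{m+1} t/(1 − t q^{m+1}) ) = ∑_{m=0}^∞ (−1)^m q^{m(m+1)/2} (1 − q^{2m+1}) / ( (1 − t^{−1}q^m)(1 − t q^{m+1}) ). -/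

import Mathlib

theorem aux_exp (m : ℕ) (k : ℤ) :
    (((m : ℤ) + 1) * ((m : ℤ) - 2 * k)) / 2 = ((m * (m + 1) / 2 : ℕ) : ℤ) - (m + 1) * k := by
  have h : ((m : ℤ) + 1) * ((m : ℤ) - 2 * k) = (m * (m + 1) : ℤ) + (-((m + 1) * k)) * 2 := by ring
  rw [h, Int.add_mul_ediv_right _ _ (by norm_num)]
  push_cast
  ring

theorem aux_tri (m : ℕ) : (2 : ℤ) * ((m * (m + 1) / 2 : ℕ) : ℤ) = m * (m + 1) := by
  have h : 2 * (m * (m + 1) / 2) = m * (m + 1) :=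
    Nat.mul_div_cancel' (Nat.even_mul_succ_self m).two_dvd
  exact_mod_cast h

/-- the kernel -/
noncomputable def auxG (q t : ℂ) (j : ℕ) : ℤ → ℂ
  | Int.ofNat n => (t⁻¹ * q ^ j) ^ n
  | Int.negSucc n => (t * q ^ (j + 1)) ^ (n + 1)

/-- terms of c -/
noncomputable def auxC (q : ℂ) (k : ℤ) (m : ℕ) : ℂ :=
  (-1 : ℂ) ^ m * q ^ ((((m : ℤ) + 1) * ((m : ℤ) - 2 * k)) / 2)

theorem auxC_shift (q t : ℂ) (hq : q ≠ 0) (n j : ℕ) :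
    auxC q n (j + 2 * n) * t ^ (-(n : ℤ)) =
      (-1 : ℂ) ^ j * q ^ (j * (j + 1) / 2) * auxG q t j (n : ℤ) := by
  have e : auxG q t j (n : ℤ) = (t⁻¹ * q ^ j) ^ n := rfl
  rw [e, auxC, aux_exp, mul_pow, inv_pow, zpow_neg, zpow_natCast]
  have e2 : (((j + 2 * n) * ((j + 2 * n) + 1) / 2 : ℕ) : ℤ) - (((j + 2 * n : ℕ) : ℤ) + 1) * n
      = ((j * (j + 1) / 2 + j * n : ℕ) : ℤ) := by
    have h1 := aux_tri j
    have h2 := aux_tri (j + 2 * n)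
    push_cast at h1 h2 ⊢
    linarith
  rw [e2, zpow_natCast, pow_add, pow_add, pow_mul (-1 : ℂ), pow_mul]
  simp
  ring

theorem auxC_neg (q t : ℂ) (n j : ℕ) :
    auxC q (Int.negSucc n) j * t ^ (-(Int.negSucc n)) =
      (-1 : ℂ) ^ j * q ^ (j * (j + 1) / 2) * auxG q t j (Int.negSucc n) := by
  have e : auxG q t j (Int.negSucc n) = (t * q ^ (j + 1)) ^ (n + 1) := rfl
  rw [e, auxC, aux_exp, mul_pow]
  have e2 : ((j * (j + 1) / 2 : ℕ) : ℤ) - ((j : ℤ) + 1) * Int.negSucc n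
      = ((j * (j + 1) / 2 + (j + 1) * (n + 1) : ℕ) : ℤ) := by
    rw [Int.negSucc_eq]; push_cast; ring
  have e3 : -(Int.negSucc n) = ((n + 1 : ℕ) : ℤ) := by
    rw [Int.negSucc_eq]; push_cast; ring
  rw [e2, e3, zpow_natCast, zpow_natCast, pow_add, pow_mul]
  ring

theorem auxC_cancel (q : ℂ) (n : ℕ) : ∑ m ∈ Finset.range (2 * n), auxC q n m = 0 := by
  have h := Finset.sum_range_reflect (auxC q n) (2 * n)
  have h2 : ∑ m ∈ Finset.range (2 * n), auxC q n (2 * n - 1 - m) =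
      ∑ m ∈ Finset.range (2 * n), - auxC q n m := by
    apply Finset.sum_congr rfl
    intro m hm
    rw [Finset.mem_range] at hm
    obtain ⟨p, hp⟩ : ∃ p, 2 * n = p + 1 + m := ⟨2 * n - 1 - m, by omega⟩
    have e : 2 * n - 1 - m = p := by omega
    have hz : (2 : ℤ) * n = p + 1 + m := by exact_mod_cast hp
    rw [e, auxC, auxC, hz]
    have e1 : ((p : ℤ) + 1) * ((p : ℤ) - (p + 1 + m)) = ((m : ℤ) + 1) * ((m : ℤ) - (p + 1 + m)) := by
      ring
    rw [e1]
    have e4 : (-1 : ℂ) ^ p * (-1) ^ m = -1 := by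
      have : (-1 : ℂ) ^ (p + 1 + m) = 1 := by rw [← hp, pow_mul]; simp
      rw [pow_add, pow_succ] at this
      linear_combination -this
    have e5 : (-1 : ℂ) ^ m * (-1) ^ m = 1 := by
      rw [← mul_pow]; simp
    have e6 : (-1 : ℂ) ^ p = - (-1) ^ m := by
      linear_combination (-1 : ℂ) ^ m * e4 - (-1 : ℂ) ^ p * e5
    rw [e6]; ring
  rw [h2, Finset.sum_neg_distrib] at h
  linear_combination (-1 / 2 : ℂ) * h

theorem auxG_bound (q t : ℂ) (hq1 : ‖q‖ < 1) (j : ℕ) (k : ℤ) :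
    ‖auxG q t j k‖ ≤ (max ‖t⁻¹‖ ‖t * q‖) ^ k.natAbs := by
  have hb : ∀ j : ℕ, ‖q‖ ^ j ≤ 1 := fun j => pow_le_one₀ (norm_nonneg _) hq1.le
  cases k with
  | ofNat n =>
    have e : auxG q t j (Int.ofNat n) = (t⁻¹ * q ^ j) ^ n := rfl
    rw [e, norm_pow]
    apply pow_le_pow_left₀ (norm_nonneg _)
    rw [norm_mul, norm_pow]
    exact (mul_le_of_le_one_right (norm_nonneg _) (hb j)).trans (le_max_left _ _)
  | negSucc n =>
    have e : auxG q t j (Int.negSucc n) = (t * q ^ (j + 1)) ^ (n + 1) := rfl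
    rw [e, norm_pow]
    apply pow_le_pow_left₀ (norm_nonneg _)
    rw [pow_succ', ← mul_assoc, norm_mul, norm_pow]
    exact (mul_le_of_le_one_right (norm_nonneg _) (hb j)).trans (le_max_right _ _)

theorem aux_sum_int (r : ℝ) (h0 : 0 ≤ r) (h1 : r < 1) :
    Summable fun k : ℤ => r ^ k.natAbs := by
  apply Summable.of_nat_of_neg
  · simpa using summable_geometric_of_lt_one h0 h1
  · simpa using summable_geometric_of_lt_one h0 h1

theorem aux_tri_bound (q : ℂ) (hq1 : ‖q‖ < 1) (j : ℕ) :
    ‖(-1 : ℂ) ^ j * q ^ (j * (j + 1) / 2)‖ ≤ ‖q‖ ^ j := by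
  rw [norm_mul, norm_pow, norm_pow, norm_neg, norm_one, one_pow, one_mul]
  apply pow_le_pow_of_le_one (norm_nonneg _) hq1.le
  rcases Nat.eq_zero_or_pos j with h | h
  · simp [h]
  · rw [Nat.le_div_iff_mul_le (by norm_num)]
    exact Nat.mul_le_mul_left _ (by omega)

theorem aux_summable (q t : ℂ) (hq1 : ‖q‖ < 1) (h1 : ‖t⁻¹‖ < 1) (h2 : ‖t * q‖ < 1) :
    Summable fun p : ℤ × ℕ =>
      ‖(-1 : ℂ) ^ p.2 * q ^ (p.2 * (p.2 + 1) / 2) * auxG q t p.2 p.1‖ := by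
  have hr0 : 0 ≤ max ‖t⁻¹‖ ‖t * q‖ := (norm_nonneg _).trans (le_max_left _ _)
  have hs := (aux_sum_int _ hr0 (max_lt h1 h2)).mul_of_nonneg
    (summable_geometric_of_lt_one (norm_nonneg q) hq1)
    (fun k => pow_nonneg hr0 _) (fun j => pow_nonneg (norm_nonneg _) _)
  refine Summable.of_nonneg_of_le (fun _ => norm_nonneg _) ?_ hs
  rintro ⟨k, j⟩
  rw [norm_mul, mul_comm]
  exact mul_le_mul (auxG_bound q t hq1 j k) (aux_tri_bound q hq1 j) (norm_nonneg _)
    (pow_nonneg hr0 _)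

theorem auxC_summable (q : ℂ) (hq : q ≠ 0) (hq1 : ‖q‖ < 1) (k : ℤ) :
    Summable fun m : ℕ => ‖auxC q k m‖ := by
  have hS : Summable fun j : ℕ => ‖(-1 : ℂ) ^ j * q ^ (j * (j + 1) / 2) * auxG q 1 j k‖ := by
    have hB : ∃ B : ℝ, ∀ j, ‖auxG q 1 j k‖ ≤ B := ⟨_, fun j => auxG_bound q 1 hq1 j k⟩
    obtain ⟨B, hB⟩ := hB
    refine Summable.of_nonneg_of_le (fun _ => norm_nonneg _) (fun j => ?_)
      ((summable_geometric_of_lt_one (norm_nonneg q) hq1).mul_right B)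
    rw [norm_mul]
    exact mul_le_mul (aux_tri_bound q hq1 j) (hB j) (norm_nonneg _)
      (pow_nonneg (norm_nonneg _) _)
  cases k with
  | ofNat n =>
    rw [← summable_nat_add_iff (2 * n)]
    refine hS.congr (fun j => ?_)
    have := auxC_shift q 1 hq n j
    rw [one_zpow, mul_one] at this
    exact (congrArg norm this).symm
  | negSucc n =>
    refine hS.congr (fun j => ?_)
    have := auxC_neg q 1 n j
    rw [one_zpow, mul_one] at this
    exact (congrArg norm this).symm

theorem auxC_tsum (q t : ℂ) (hq : q ≠ 0) (hq1 : ‖q‖ < 1) (k : ℤ) :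
    (∑' m, auxC q k m) * t ^ (-k) =
      ∑' j : ℕ, (-1 : ℂ) ^ j * q ^ (j * (j + 1) / 2) * auxG q t j k := by
  cases k with
  | ofNat n =>
    have hs := (auxC_summable q hq hq1 n).of_norm
    have h := hs.sum_add_tsum_nat_add (2 * n)
    rw [auxC_cancel, zero_add] at h
    change (∑' m, auxC q n m) * t ^ (-(n : ℤ)) = _
    rw [← h, ← tsum_mul_right]
    exact tsum_congr fun j => auxC_shift q t hq n j
  | negSucc n =>
    rw [← tsum_mul_right]
    exact tsum_congr fun j => auxC_neg q t n j

theorem auxG_hasSum (q t : ℂ) (j : ℕ) (h1 : ‖t⁻¹ * q ^ j‖ < 1) (h2 : ‖t * q ^ (j + 1)‖ < 1) :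
    HasSum (auxG q t j) ((1 - t⁻¹ * q ^ j)⁻¹ +
      (1 - t * q ^ (j + 1))⁻¹ * (t * q ^ (j + 1))) := by
  apply HasSum.of_nat_of_neg_add_one
  · exact hasSum_geometric_of_norm_lt_one h1
  · have h := (hasSum_geometric_of_norm_lt_one h2).mul_right (t * q ^ (j + 1))
    have e : ∀ n : ℕ, auxG q t j (-((n : ℤ) + 1)) = (t * q ^ (j + 1)) ^ n * (t * q ^ (j + 1)) := by
      intro n
      rw [← Int.negSucc_eq, ← pow_succ]
      rfl
    simpa only [e] using h

/-- **Resummation of the Bloch–Okounkov 1-point series.**  For `0 < |q| < 1` all the series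
`c_k(q) = ∑_{m≥0} (-1)^m q^{(m+1)(m-2k)/2}` (`k ∈ ℤ`) converge absolutely, and for every
`t` with `1 < |t| < 1/|q|` the bilateral series `∑_{k∈ℤ} c_k(q) t^{-k}` converges
absolutely and equals
`∑_{m≥0} (-1)^m q^{m(m+1)/2} ( q^m t⁻¹/(1-t⁻¹q^m) + 1 + q^{m+1} t/(1-tq^{m+1}) )`
`= ∑_{m≥0} (-1)^m q^{m(m+1)/2} (1-q^{2m+1})/((1-t⁻¹q^m)(1-tq^{m+1}))`. -/
theorem stmt10 (q : ℂ) (hq0 : 0 < ‖q‖) (hq1 : ‖q‖ < 1) :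
    (∀ k : ℤ, Summable fun m : ℕ =>
      ‖(-1 : ℂ) ^ m * q ^ ((((m : ℤ) + 1) * ((m : ℤ) - 2 * k)) / 2)‖) ∧
    ∀ t : ℂ, 1 < ‖t‖ → ‖t‖ < 1 / ‖q‖ →
      (Summable fun k : ℤ =>
        ‖(∑' m : ℕ, (-1 : ℂ) ^ m * q ^ ((((m : ℤ) + 1) * ((m : ℤ) - 2 * k)) / 2)) *
          t ^ (-k)‖) ∧
      (∑' k : ℤ,
          (∑' m : ℕ, (-1 : ℂ) ^ m * q ^ ((((m : ℤ) + 1) * ((m : ℤ) - 2 * k)) / 2)) * t ^ (-k))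
        = ∑' m : ℕ, (-1 : ℂ) ^ m * q ^ (m * (m + 1) / 2) *
            (q ^ m * t⁻¹ / (1 - t⁻¹ * q ^ m) + 1 + q ^ (m + 1) * t / (1 - t * q ^ (m + 1))) ∧
      (∑' k : ℤ,
          (∑' m : ℕ, (-1 : ℂ) ^ m * q ^ ((((m : ℤ) + 1) * ((m : ℤ) - 2 * k)) / 2)) * t ^ (-k))
        = ∑' m : ℕ, (-1 : ℂ) ^ m * q ^ (m * (m + 1) / 2) * (1 - q ^ (2 * m + 1)) /
            ((1 - t⁻¹ * q ^ m) * (1 - t * q ^ (m + 1))) := by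
  have hq : q ≠ 0 := norm_pos_iff.mp hq0
  refine ⟨fun k => auxC_summable q hq hq1 k, fun t ht1 ht2 => ?_⟩
  have ht : t ≠ 0 := by
    rintro rfl
    simp at ht1
    linarith
  have h1 : ‖t⁻¹‖ < 1 := by
    rw [norm_inv]; exact inv_lt_one_of_one_lt₀ ht1
  have h2 : ‖t * q‖ < 1 := by
    rw [norm_mul]; exact (lt_div_iff₀ hq0).mp ht2
  have hS := aux_summable q t hq1 h1 h2
  have hb : ∀ j : ℕ, ‖q‖ ^ j ≤ 1 := fun j => pow_le_one₀ (norm_nonneg _) hq1.le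
  have h1j : ∀ j : ℕ, ‖t⁻¹ * q ^ j‖ < 1 := fun j => by
    rw [norm_mul, norm_pow]
    exact (mul_le_of_le_one_right (norm_nonneg _) (hb j)).trans_lt h1
  have h2j : ∀ j : ℕ, ‖t * q ^ (j + 1)‖ < 1 := fun j => by
    rw [pow_succ', ← mul_assoc, norm_mul, norm_pow]
    exact (mul_le_of_le_one_right (norm_nonneg _) (hb j)).trans_lt h2
  have hne : ∀ x : ℂ, ‖x‖ < 1 → 1 - x ≠ 0 := fun x hx h => by
    rw [← sub_eq_zero.mp h] at hx
    simp at hx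
  have hT : ∀ k : ℤ,
      (∑' m : ℕ, (-1 : ℂ) ^ m * q ^ ((((m : ℤ) + 1) * ((m : ℤ) - 2 * k)) / 2)) * t ^ (-k)
        = ∑' j : ℕ, (-1 : ℂ) ^ j * q ^ (j * (j + 1) / 2) * auxG q t j k :=
    fun k => auxC_tsum q t hq hq1 k
  simp_rw [hT]
  have hM : (∑' k : ℤ, ∑' j : ℕ, (-1 : ℂ) ^ j * q ^ (j * (j + 1) / 2) * auxG q t j k) =
      ∑' j : ℕ, (-1 : ℂ) ^ j * q ^ (j * (j + 1) / 2) * ((1 - t⁻¹ * q ^ j)⁻¹ +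
      (1 - t * q ^ (j + 1))⁻¹ * (t * q ^ (j + 1))) := by
    have hc := Summable.tsum_comm (f := fun (k : ℤ) (j : ℕ) =>
      (-1 : ℂ) ^ j * q ^ (j * (j + 1) / 2) * auxG q t j k) hS.of_norm
    rw [← hc]
    refine tsum_congr fun j => ?_
    rw [tsum_mul_left, (auxG_hasSum q t j (h1j j) (h2j j)).tsum_eq]
  refine ⟨?_, ?_, ?_⟩
  · refine Summable.of_nonneg_of_le (fun _ => norm_nonneg _) (fun k => ?_) hS.prod
    exact norm_tsum_le_tsum_norm (hS.prod_factor k)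
  · rw [hM]
    refine tsum_congr fun j => ?_
    congr 1
    have a := hne _ (h1j j)
    have b := hne _ (h2j j)
    rw [mul_comm (q ^ j), mul_comm (q ^ (j + 1))]
    generalize t⁻¹ * q ^ j = x at *
    generalize t * q ^ (j + 1) = y at *
    field_simp
    ring
  · rw [hM]
    refine tsum_congr fun j => ?_
    have a := hne _ (h1j j)
    have b := hne _ (h2j j)
    have e : q ^ (2 * j + 1) = (t⁻¹ * q ^ j) * (t * q ^ (j + 1)) := by
      field_simp
      ring
    rw [e, mul_div_assoc]
    congr 1
    generalize t⁻¹ * q ^ j = x at *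
    generalize t * q ^ (j + 1) = y at *
    field_simp
    ring
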